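/- For all φ₁, φ₂ ∈ [0,1), the pushforward of the product measure μ × μ on [0,1) × [0,1) under the map (u₁, u₂) ↦ (u₁, F_{φ₁}(u₁, u₂)) equals the pushforward under (u₁, u₂) ↦ (u₁, F_{φ₂}(u₁, u₂)); i.e., the joint observational distribution of (X₁, X₂) generated by the SCM X₁ = U₁, X₂ = F_φ(X₁, U₂) with U₁, U₂ independent uniform on [0,1) is the same for every parametrization φ. -/

import Mathlib

/-!
On `[0,1)` the wrapped shift `ζ_φ` agrees with `u ↦ fract (u + φ)`. Since `fract` is 1-periodic, its
law under Lebesgue measure on `[φ, φ + 1)` is its law on `[0,1)`, so `ζ_φ` preserves the uniform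
measure. Hence the law of `F_φ(x₁, U₂)` does not depend on `φ` for any fixed `x₁`, and Fubini's
theorem assembles these conditional laws into the joint one.
-/

open MeasureTheory

/-- The shift of `[0,1)` by `φ`, wrapped around modulo 1. -/
noncomputable def zeta (φ u : ℝ) : ℝ := if 1 ≤ u + φ then u + φ - 1 else u + φ

/-- The structural function of the SCM: `X₂ = u₂·x₁` if `x₁ < 1/2`
and `X₂ = ζ_φ(u₂)` if `x₁ ≥ 1/2`. -/
noncomputable def F (φ x₁ u₂ : ℝ) : ℝ := if x₁ < 1 / 2 then u₂ * x₁ else zeta φ u₂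

/-- The uniform probability measure on `[0,1)`. -/
noncomputable def unif : Measure ℝ := volume.restrict (Set.Ico (0 : ℝ) 1)

section FibrewiseMap

variable {α β γ : Type*} [MeasurableSpace α] [MeasurableSpace β] [MeasurableSpace γ]
  {μ : Measure α} {ν : Measure β} [SFinite ν] {f g : α → β → γ}

theorem map_fst_prodMk_apply (hf : Measurable (Function.uncurry f)) {s : Set (α × γ)}
    (hs : MeasurableSet s) :
    (μ.prod ν).map (fun p => (p.1, f p.1 p.2)) s = ∫⁻ a, ν.map (f a) (Prod.mk a ⁻¹' s) ∂μ := by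
  have measurable_graph : Measurable (fun p : α × β => (p.1, f p.1 p.2)) :=
    measurable_fst.prodMk hf
  rw [Measure.map_apply measurable_graph hs, Measure.prod_apply (measurable_graph hs)]
  refine lintegral_congr fun a => ?_
  rw [Measure.map_apply hf.of_uncurry_left (measurable_prodMk_left hs)]
  rfl

theorem map_fst_prodMk_congr (hf : Measurable (Function.uncurry f))
    (hg : Measurable (Function.uncurry g)) (hfg : ∀ᵐ a ∂μ, ν.map (f a) = ν.map (g a)) :
    (μ.prod ν).map (fun p => (p.1, f p.1 p.2)) = (μ.prod ν).map (fun p => (p.1, g p.1 p.2)) := by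
  ext s hs
  rw [map_fst_prodMk_apply hf hs, map_fst_prodMk_apply hg hs]
  exact lintegral_congr_ae (hfg.mono fun a ha => DFunLike.congr_fun ha (Prod.mk a ⁻¹' s))

end FibrewiseMap

theorem map_restrict_Ico_eq_of_periodic {α : Type*} [MeasurableSpace α] {f : ℝ → α} {T : ℝ}
    (hf : Function.Periodic f T) (hfm : Measurable f) (hT : 0 < T) (a b : ℝ) :
    (volume.restrict (Set.Ico a (a + T))).map f = (volume.restrict (Set.Ico b (b + T))).map f := by
  ext s hs
  have preimage_invariant : ∀ g : AddSubgroup.zmultiples T,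
      (fun x : ℝ => g +ᵥ x) ⁻¹' (f ⁻¹' s) = f ⁻¹' s := fun g => by
    ext x
    simp only [Set.mem_preimage, hf.map_vadd_zmultiples g x]
  simp only [restrict_Ico_eq_restrict_Ioc, Measure.map_apply hfm hs,
    Measure.restrict_apply (hfm hs)]
  exact (isAddFundamentalDomain_Ioc hT a).measure_set_eq (isAddFundamentalDomain_Ioc hT b)
    (hfm hs) preimage_invariant

theorem map_add_right_restrict_Ico {G : Type*} [AddCommGroup G] [LinearOrder G]
    [IsOrderedAddMonoid G] [TopologicalSpace G] [OrderClosedTopology G] [MeasurableSpace G]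
    [OpensMeasurableSpace G] [MeasurableAdd G] (μ : Measure G) [μ.IsAddRightInvariant] (a b c : G) :
    (μ.restrict (Set.Ico a b)).map (· + c) = μ.restrict (Set.Ico (a + c) (b + c)) := by
  have translation_preserving := (measurePreserving_add_right μ c).restrict_preimage
    (measurableSet_Ico (a := a + c) (b := b + c))
  simpa only [Set.preimage_add_const_Ico, add_sub_cancel_right] using translation_preserving.map_eq

instance : SFinite unif := inferInstanceAs (SFinite (volume.restrict (Set.Ico (0 : ℝ) 1)))

theorem map_unif_congr {α : Type*} [MeasurableSpace α] {f g : ℝ → α}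
    (hfg : Set.EqOn f g (Set.Ico 0 1)) : unif.map f = unif.map g :=
  Measure.map_congr (ae_restrict_of_forall_mem measurableSet_Ico hfg)

theorem map_fract_add_unif (φ : ℝ) : unif.map (fun u => Int.fract (u + φ)) = unif :=
  calc
    unif.map (fun u => Int.fract (u + φ))
      = (unif.map (· + φ)).map Int.fract :=
        (Measure.map_map measurable_fract (measurable_add_const φ)).symm
    _ = (volume.restrict (Set.Ico φ (φ + 1))).map Int.fract := by
        rw [unif, map_add_right_restrict_Ico, zero_add, add_comm 1 φ]
    _ = (volume.restrict (Set.Ico 0 (0 + 1))).map Int.fract :=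
        map_restrict_Ico_eq_of_periodic (Int.fract_periodic ℝ) measurable_fract one_pos φ 0
    _ = unif.map Int.fract := by rw [zero_add, unif]
    _ = unif.map id := map_unif_congr fun _ hu => Int.fract_eq_self.mpr hu
    _ = unif := Measure.map_id

theorem zeta_eq_fract {φ u : ℝ} (h : u + φ ∈ Set.Ico (0 : ℝ) 2) : zeta φ u = Int.fract (u + φ) := by
  obtain ⟨h_nonneg, h_lt_two⟩ := h
  unfold zeta
  split_ifs with h_wrap
  · rw [← Int.fract_sub_one, Int.fract_eq_self.mpr ⟨by linarith, by linarith⟩]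
  · exact (Int.fract_eq_self.mpr ⟨h_nonneg, not_le.mp h_wrap⟩).symm

theorem map_zeta_unif {φ : ℝ} (hφ : φ ∈ Set.Icc (0 : ℝ) 1) : unif.map (zeta φ) = unif :=
  calc
    unif.map (zeta φ) = unif.map (fun u => Int.fract (u + φ)) :=
      map_unif_congr fun u hu =>
        zeta_eq_fract ⟨add_nonneg hu.1 hφ.1, by linarith [hu.2, hφ.2]⟩
    _ = unif := map_fract_add_unif φ

@[fun_prop]
theorem measurable_zeta (φ : ℝ) : Measurable (zeta φ) :=
  Measurable.ite (measurableSet_le (by fun_prop) (by fun_prop)) (by fun_prop) (by fun_prop)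

theorem measurable_uncurry_F (φ : ℝ) : Measurable (Function.uncurry (F φ)) :=
  Measurable.ite (measurableSet_lt measurable_fst measurable_const) (by fun_prop) (by fun_prop)

theorem map_F_unif {φ : ℝ} (hφ : φ ∈ Set.Icc (0 : ℝ) 1) (x : ℝ) :
    unif.map (F φ x) = if x < 1 / 2 then unif.map (· * x) else unif := by
  unfold F
  split_ifs
  · rfl
  · exact map_zeta_unif hφ

theorem observational_dist_indep_of_param_general (μ : Measure ℝ) {φ₁ φ₂ : ℝ}
    (hφ₁ : φ₁ ∈ Set.Icc (0 : ℝ) 1) (hφ₂ : φ₂ ∈ Set.Icc (0 : ℝ) 1) :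
    Measure.map (fun u : ℝ × ℝ => (u.1, F φ₁ u.1 u.2)) (μ.prod unif) =
    Measure.map (fun u : ℝ × ℝ => (u.1, F φ₂ u.1 u.2)) (μ.prod unif) :=
  map_fst_prodMk_congr (measurable_uncurry_F φ₁) (measurable_uncurry_F φ₂) <|
    ae_of_all μ fun x => (map_F_unif hφ₁ x).trans (map_F_unif hφ₂ x).symm

/-- The joint observational distribution of `(X₁, X₂)` generated by the SCM
`X₁ = U₁`, `X₂ = F_φ(X₁, U₂)` with `U₁, U₂` independent uniform on `[0,1)` is
the same for every parametrization `φ`. -/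
theorem observational_dist_indep_of_param (φ₁ φ₂ : ℝ)
    (hφ₁ : φ₁ ∈ Set.Ico (0 : ℝ) 1) (hφ₂ : φ₂ ∈ Set.Ico (0 : ℝ) 1) :
    Measure.map (fun u : ℝ × ℝ => (u.1, F φ₁ u.1 u.2)) (unif.prod unif) =
    Measure.map (fun u : ℝ × ℝ => (u.1, F φ₂ u.1 u.2)) (unif.prod unif) :=
  observational_dist_indep_of_param_general unif (Set.Ico_subset_Icc_self hφ₁)
    (Set.Ico_subset_Icc_self hφ₂)
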